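/- Define ψ_n = Σ_{i=0}^{n} 2^{i(n−i)}/(i!·(n−i)!) as a real number. Then lim_{k→∞} ψ_{2k}·(k!)^2/2^{k^2} = Σ_{i ∈ ℤ} 2^{−i^2} and lim_{k→∞} ψ_{2k+1}·k!·(k+1)!/2^{k(k+1)} = Σ_{i ∈ ℤ} 2^{−i(i+1)} (both series over ℤ being absolutely convergent). In particular, there exist positive constants C₁, C₂ with ψ_{2k} ∼ C₁·2^{k^2}/(k!)^2 and ψ_{2k+1} ∼ C₂·2^{k(k+1)}/(k!·(k+1)!) as k → ∞. -/

import Mathlib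

open Filter

/-- `ψ_n = Σ_{i=0}^{n} 2^{i(n−i)}/(i!·(n−i)!)`. -/
noncomputable def psi (n : ℕ) : ℝ :=
  ∑ i ∈ Finset.range (n + 1),
    (2 : ℝ) ^ (i * (n - i)) / (i.factorial * (n - i).factorial)

/-!
Write `n = 2k + e`. Since `n! ψ_n = ∑ i, (n choose i) 2^{i(n-i)}`, recentring at `i = k + e + j`
turns the exponent into `k(k+e) - j(j+e)`, so that `ψ_n k! (k+e)! / 2^{k(k+e)}` is the sum over
`j ∈ ℤ` of `2^{-j(j+e)}` weighted by the binomial quotient `(n choose k+e+j) / (n choose k+e)`.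
For fixed `j` the quotient tends to `1` as `k → ∞`, and it is bounded uniformly in `j` and `k`
because it is largest at the middle binomial coefficient, which is itself one of these fixed-`j`
quotients. Dominated convergence for series gives the limit, and `e = 0, 1` are the two parities
of `n`.
-/

open scoped Nat Topology

/-- The binomial coefficient `n choose i` with integer lower index, zero for `i < 0`, so that sums
of binomial coefficients can be recentred over all of `ℤ`. -/
def intChoose (n : ℕ) : ℤ → ℕ
  | .ofNat i => n.choose i
  | .negSucc _ => 0

@[simp]
lemma intChoose_natCast (n i : ℕ) : intChoose n i = n.choose i := rfl

lemma intChoose_of_neg (n : ℕ) {i : ℤ} (hi : i < 0) : intChoose n i = 0 := by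
  obtain ⟨m, rfl⟩ := Int.eq_negSucc_of_lt_zero hi
  rfl

lemma intChoose_succ_mul (n : ℕ) (i : ℤ) :
    (intChoose n (i + 1) : ℤ) * (i + 1) = intChoose n i * (n - i) := by
  obtain hi | rfl | hi : 0 ≤ i ∨ i = -1 ∨ i + 1 < 0 := by omega
  · lift i to ℕ using hi
    rcases le_or_gt i n with hin | hin
    · have := Nat.choose_succ_right_eq n i
      rw [← Nat.cast_succ, intChoose_natCast, intChoose_natCast]
      zify [hin] at this
      exact this
    · rw [← Nat.cast_succ, intChoose_natCast, intChoose_natCast, Nat.choose_eq_zero_of_lt hin,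
        Nat.choose_eq_zero_of_lt (hin.trans i.lt_succ_self)]
      simp
  · simp [intChoose_of_neg]
  · simp [intChoose_of_neg n hi, intChoose_of_neg n (show i < 0 by omega)]

lemma intChoose_le_middle (n : ℕ) (i : ℤ) : intChoose n i ≤ n.choose (n / 2) := by
  cases i with
  | ofNat i => exact Nat.choose_le_middle i n
  | negSucc i => exact zero_le

/-- The quotient of the binomial coefficient of `2k + e` at offset `j` from `k + e` by the one at
`k + e`. It is the weight `k! (k+e)! / ((k-j)! (k+e+j)!)`, extended by zero to all `j ∈ ℤ`. -/
noncomputable def centralRatio (e k : ℕ) (j : ℤ) : ℝ :=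
  intChoose (2 * k + e) (k + e + j) / (2 * k + e).choose (k + e)

lemma centralRatio_nonneg (e k : ℕ) (j : ℤ) : 0 ≤ centralRatio e k j := by
  unfold centralRatio
  positivity

lemma choose_two_mul_add_pos (e k : ℕ) : 0 < (2 * k + e).choose (k + e) :=
  Nat.choose_pos (by omega)

lemma centralRatio_zero (e k : ℕ) : centralRatio e k 0 = 1 := by
  have := choose_two_mul_add_pos e k
  rw [centralRatio, add_zero, ← Nat.cast_add, intChoose_natCast, div_self (by positivity)]

lemma centralRatio_succ_mul (e k : ℕ) (j : ℤ) :
    centralRatio e k (j + 1) * (k + e + j + 1) = centralRatio e k j * (k - j) := by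
  have h : (intChoose (2 * k + e) (k + e + (j + 1)) : ℝ) * (k + e + j + 1) =
      intChoose (2 * k + e) (k + e + j) * (k - j) := by
    have := intChoose_succ_mul (2 * k + e) (k + e + j)
    rw [show ((2 * k + e : ℕ) : ℤ) - (k + e + j) = k - j by push_cast; ring, add_assoc _ j] at this
    rw [add_assoc _ (j : ℝ)]
    exact_mod_cast this
  rw [centralRatio, centralRatio, div_mul_eq_mul_div, div_mul_eq_mul_div, h]

lemma tendsto_natCast_add_div_natCast_add (a b : ℝ) :
    Tendsto (fun k : ℕ => (k + a) / (k + b)) atTop (𝓝 1) := by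
  simpa [add_comm] using tendsto_add_mul_div_add_mul_atTop_nhds a b 1 one_ne_zero

lemma tendsto_centralRatio_succ_iff (e : ℕ) (j : ℤ) :
    Tendsto (fun k => centralRatio e k (j + 1)) atTop (𝓝 1) ↔
      Tendsto (fun k => centralRatio e k j) atTop (𝓝 1) := by
  have hnum : ∀ᶠ k : ℕ in atTop, (0 : ℝ) < k + -j :=
    (tendsto_atTop_add_const_right _ _ tendsto_natCast_atTop_atTop).eventually_gt_atTop 0
  have hden : ∀ᶠ k : ℕ in atTop, (0 : ℝ) < k + (e + j + 1) :=
    (tendsto_atTop_add_const_right _ _ tendsto_natCast_atTop_atTop).eventually_gt_atTop 0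
  constructor <;> intro h
  · have := h.mul (tendsto_natCast_add_div_natCast_add (e + j + 1) (-j))
    rw [one_mul] at this
    refine this.congr' ?_
    filter_upwards [hnum] with k hk
    rw [mul_div_assoc', div_eq_iff hk.ne', ← sub_eq_add_neg, ← centralRatio_succ_mul]
    ring
  · have := h.mul (tendsto_natCast_add_div_natCast_add (-j) (e + j + 1))
    rw [one_mul] at this
    refine this.congr' ?_
    filter_upwards [hden] with k hk
    rw [mul_div_assoc', div_eq_iff hk.ne', ← sub_eq_add_neg, ← centralRatio_succ_mul]
    ring

lemma tendsto_centralRatio (e : ℕ) (j : ℤ) :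
    Tendsto (fun k => centralRatio e k j) atTop (𝓝 1) := by
  induction j using Int.induction_on with
  | zero => simpa only [centralRatio_zero] using tendsto_const_nhds
  | succ j ih => exact (tendsto_centralRatio_succ_iff e j).2 ih
  | pred j ih => exact (tendsto_centralRatio_succ_iff e _).1 (by rwa [sub_add_cancel])

lemma exists_forall_centralRatio_le (e : ℕ) : ∃ C, ∀ k j, centralRatio e k j ≤ C := by
  obtain ⟨C, hC⟩ := (tendsto_centralRatio e ((e / 2 : ℕ) - e)).bddAbove_range
  refine ⟨C, fun k j => ?_⟩
  calc centralRatio e k j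
      ≤ centralRatio e k ((e / 2 : ℕ) - e) := by
        have hmiddle : (k + e + ((e / 2 : ℕ) - e) : ℤ) = ((2 * k + e) / 2 : ℕ) := by omega
        rw [centralRatio, centralRatio, hmiddle, intChoose_natCast]
        gcongr
        exact intChoose_le_middle _ _
    _ ≤ C := hC (Set.mem_range_self k)

lemma summable_zpow_neg_mul_add {q : ℝ} (hq : 1 < q) (b : ℤ) :
    Summable fun j : ℤ => q ^ (-(j * (j + b))) := by
  -- With these parameters the Jacobi theta terms have norm `q ^ (-(j * (j + b)))`.
  let z : ℂ := ⟨0, b * Real.log q / (2 * Real.pi)⟩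
  let τ : ℂ := ⟨0, Real.log q / Real.pi⟩
  have hτ : 0 < τ.im := div_pos (Real.log_pos hq) Real.pi_pos
  refine ((summable_jacobiTheta₂_term_iff z τ).2 hτ).norm.congr fun j => ?_
  rw [norm_jacobiTheta₂_term, ← Real.rpow_intCast, Real.rpow_def_of_pos (by positivity)]
  congr 1
  dsimp only [z, τ]
  push_cast
  field_simp
  ring

lemma tsum_zpow_neg_mul_add_pos {q : ℝ} (hq : 1 < q) (b : ℤ) :
    0 < ∑' j : ℤ, q ^ (-(j * (j + b))) :=
  (summable_zpow_neg_mul_add hq b).tsum_pos (fun _ => by positivity) 0 (by positivity)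

lemma tendsto_tsum_zpow_mul_centralRatio {q : ℝ} (hq : 1 < q) (e : ℕ) :
    Tendsto (fun k => ∑' j : ℤ, q ^ (-(j * (j + e))) * centralRatio e k j) atTop
      (𝓝 (∑' j : ℤ, q ^ (-(j * (j + e))))) := by
  obtain ⟨C, hC⟩ := exists_forall_centralRatio_le e
  refine tendsto_tsum_of_dominated_convergence ((summable_zpow_neg_mul_add hq e).mul_right C)
    (fun j => ?_) (Eventually.of_forall fun k j => ?_)
  · simpa only [mul_one] using (tendsto_centralRatio e j).const_mul (q ^ (-(j * (j + e))))
  · have := centralRatio_nonneg e k j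
    rw [Real.norm_of_nonneg (by positivity)]
    gcongr
    exact hC k j

lemma psi_mul_factorial (n : ℕ) :
    psi n * n ! = ∑' i : ℤ, intChoose n i * (2 : ℝ) ^ (i * (n - i)) := by
  have hsupport : (Function.support fun i : ℤ => intChoose n i * (2 : ℝ) ^ (i * (n - i))) ⊆
      Set.range ((↑) : ℕ → ℤ) := fun i hi => by
    contrapose! hi
    have hneg : i < 0 := by
      by_contra! h
      exact hi ⟨i.toNat, Int.toNat_of_nonneg h⟩
    simp [intChoose_of_neg n hneg]
  rw [← Nat.cast_injective.tsum_eq hsupport, tsum_eq_sum (s := Finset.range (n + 1)), psi,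
    Finset.sum_mul]
  · refine Finset.sum_congr rfl fun i hi => ?_
    have hin : i ≤ n := Finset.mem_range_succ_iff.1 hi
    rw [intChoose_natCast, Nat.cast_choose ℝ hin, ← Nat.cast_sub hin, ← Nat.cast_mul i,
      zpow_natCast]
    ring
  · intro i hi
    rw [intChoose_natCast, Nat.choose_eq_zero_of_lt (by simpa [Nat.lt_succ_iff] using hi)]
    simp

lemma factorial_mul_factorial_add (e k : ℕ) :
    ((k ! : ℝ) * (k + e)!) = (2 * k + e)! / (2 * k + e).choose (k + e) := by
  have hk : 2 * k + e - (k + e) = k := by omega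
  have h := Nat.choose_mul_factorial_mul_factorial (show k + e ≤ 2 * k + e by omega)
  have := choose_two_mul_add_pos e k
  rw [hk] at h
  rw [eq_div_iff (by positivity), ← h]
  push_cast
  ring

lemma psi_two_mul_add_eq_tsum (e k : ℕ) :
    psi (2 * k + e) * ((k ! : ℝ) * (k + e)!) / 2 ^ (k * (k + e)) =
      ∑' j : ℤ, (2 : ℝ) ^ (-(j * (j + e))) * centralRatio e k j := by
  rw [factorial_mul_factorial_add, ← mul_div_assoc, psi_mul_factorial, div_div, ← tsum_div_const,
    ← (Equiv.addLeft (k + e : ℤ)).tsum_eq]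
  refine tsum_congr fun j => ?_
  have hexp : ((k + e + j) * ((2 * k + e : ℕ) - (k + e + j)) : ℤ) =
      -(j * (j + e)) + (k * (k + e) : ℕ) := by
    push_cast
    ring
  rw [Equiv.coe_addLeft, hexp, zpow_add₀ two_ne_zero, zpow_natCast, centralRatio]
  field_simp

lemma tendsto_psi_two_mul_add (e : ℕ) :
    Tendsto (fun k : ℕ => psi (2 * k + e) * ((k ! : ℝ) * (k + e)!) / 2 ^ (k * (k + e))) atTop
      (𝓝 (∑' j : ℤ, (2 : ℝ) ^ (-(j * (j + e))))) := by
  simpa only [psi_two_mul_add_eq_tsum] using tendsto_tsum_zpow_mul_centralRatio one_lt_two e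

lemma tendsto_div_const_mul_div_one {α : Type*} {l : Filter α} {f g h : α → ℝ} {C : ℝ}
    (hC : C ≠ 0) (H : Tendsto (fun x => f x * h x / g x) l (𝓝 C)) :
    Tendsto (fun x => f x / (C * g x / h x)) l (𝓝 1) := by
  simpa only [div_div_eq_mul_div, div_mul_eq_div_div_swap, div_self hC] using H.div_const C

theorem psi_asymptotics :
    Summable (fun i : ℤ => (2 : ℝ) ^ (-(i ^ 2))) ∧
    Summable (fun i : ℤ => (2 : ℝ) ^ (-(i * (i + 1)))) ∧
    Tendsto (fun k : ℕ => psi (2 * k) * (k.factorial : ℝ) ^ 2 / 2 ^ (k ^ 2)) atTop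
      (nhds (∑' i : ℤ, (2 : ℝ) ^ (-(i ^ 2)))) ∧
    Tendsto (fun k : ℕ =>
        psi (2 * k + 1) * ((k.factorial : ℝ) * ((k + 1).factorial : ℝ)) / 2 ^ (k * (k + 1)))
      atTop (nhds (∑' i : ℤ, (2 : ℝ) ^ (-(i * (i + 1))))) ∧
    (∃ C₁ : ℝ, 0 < C₁ ∧
      Tendsto (fun k : ℕ => psi (2 * k) / (C₁ * 2 ^ (k ^ 2) / (k.factorial : ℝ) ^ 2))
        atTop (nhds 1)) ∧
    (∃ C₂ : ℝ, 0 < C₂ ∧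
      Tendsto (fun k : ℕ =>
          psi (2 * k + 1) /
            (C₂ * 2 ^ (k * (k + 1)) / ((k.factorial : ℝ) * ((k + 1).factorial : ℝ))))
        atTop (nhds 1)) := by
  have summable_even := summable_zpow_neg_mul_add one_lt_two 0
  have summable_odd := summable_zpow_neg_mul_add one_lt_two 1
  have pos_even := tsum_zpow_neg_mul_add_pos one_lt_two 0
  have pos_odd := tsum_zpow_neg_mul_add_pos one_lt_two 1
  have tendsto_even := tendsto_psi_two_mul_add 0
  have tendsto_odd := tendsto_psi_two_mul_add 1
  simp only [Nat.cast_zero, add_zero, ← sq] at summable_even pos_even tendsto_even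
  rw [Nat.cast_one] at tendsto_odd
  exact ⟨summable_even, summable_odd, tendsto_even, tendsto_odd,
    ⟨_, pos_even, tendsto_div_const_mul_div_one pos_even.ne' tendsto_even⟩,
    ⟨_, pos_odd, tendsto_div_const_mul_div_one pos_odd.ne' tendsto_odd⟩⟩
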